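/- arXiv:1911.12432 — 4 statements merged into one kernel-verified Lean document; each statement's English description precedes it below -/
import Mathlib

section
/- Let G=(S,T;E) be a bipartite graph and S₁,S₂ ⊆ S with S₁∪S₂=S, S₁⊄S₂ and S₂⊄S₁, and let Eᵢ denote the set of edges incident to Sᵢ (i=1,2). Construct G'=(S',T';E') from G as follows: order S' so that the nodes of S₁∖S₂, then S₁∩S₂, then S₂∖S₁ appear in this order; insert |S₁∖S₂| new nodes into S' immediately after the last node of S₁ and |S₂∖S₁| new nodes immediately before the first node of S₂; add |S₁∖S₂|+|S₂∖S₁| new nodes to T'; and add to E' the edges of a perfect matching between the newly added S'-nodes and the newly added T'-nodes. Then, with d=|S|, the graph G' has a perfect d-distance matching if and only if there exists M ⊆ E with |M|=|S| such that both M∩E₁ and M∩E₂ are matchings. -/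
open Finset

/-- `M` is a `d`-distance matching of the bipartite graph with left node set `Fin m`
(ordered) and right node set `V`, whose edge set is `E`. -/
def DDM {m : ℕ} {V : Type*} [DecidableEq V] (d : ℕ) (E M : Finset (Fin m × V)) : Prop :=
  M ⊆ E ∧ (∀ e ∈ M, ∀ f ∈ M, e.1 = f.1 → e = f) ∧
    (∀ e ∈ M, ∀ f ∈ M, e.2 = f.2 → e ≠ f → d ≤ Nat.dist e.1.val f.1.val)

/-- A perfect `d`-distance matching covers every node of `S = Fin m`. -/
def PerfectDDM {m : ℕ} {V : Type*} [DecidableEq V] (d : ℕ) (E M : Finset (Fin m × V)) : Prop :=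
  DDM d E M ∧ ∀ i : Fin m, ∃ t, (i, t) ∈ M

/-- A set of edges is a matching if no two of its edges share a node. -/
def IsMatching {α β : Type*} (M : Finset (α × β)) : Prop :=
  ∀ e ∈ M, ∀ f ∈ M, e ≠ f → e.1 ≠ f.1 ∧ e.2 ≠ f.2

/-- The NP-hardness reduction: the graph `G'` (on the ordered node set `Fin (n + a + c)`,
obtained from `G` by ordering `S` as `S₁∖S₂`, `S₁∩S₂`, `S₂∖S₁` via `φ`, inserting
`c = |S₂∖S₁|` new nodes right before the first node of `S₂` and `a = |S₁∖S₂|` new nodes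
right after the last node of `S₁`, adding `a + c` new nodes to `T`, and adding the edges
of a perfect matching (given by `ψ`) between the new `S`-nodes and the new `T`-nodes)
has a perfect `n`-distance matching (where `n = |S|`) iff there exists `M ⊆ E` with
`|M| = |S|` such that both `M ∩ E₁` and `M ∩ E₂` are matchings, where `Eᵢ` is the set of
edges incident to `Sᵢ`. -/
theorem stmt0 {S T : Type*} [Fintype S] [DecidableEq S] [DecidableEq T]
    (E : Finset (S × T)) (S₁ S₂ : Finset S)
    (hU : S₁ ∪ S₂ = Finset.univ) (h1 : ¬ S₁ ⊆ S₂) (h2 : ¬ S₂ ⊆ S₁)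
    (a b c n : ℕ) (ha : a = (S₁ \ S₂).card) (hb : b = (S₁ ∩ S₂).card)
    (hc : c = (S₂ \ S₁).card) (hn : n = Fintype.card S)
    (φ : S → Fin (n + a + c)) (hφ : Function.Injective φ)
    (hφ1 : ∀ s ∈ S₁ \ S₂, (φ s).val < a)
    (hφ2 : ∀ s ∈ S₁ ∩ S₂, a + c ≤ (φ s).val ∧ (φ s).val < a + c + b)
    (hφ3 : ∀ s ∈ S₂ \ S₁, a + c + b + a ≤ (φ s).val)
    (ψ : Fin (n + a + c) → Fin (a + c))
    (hψ : ∀ p q : Fin (n + a + c), p ∉ Finset.univ.image φ → q ∉ Finset.univ.image φ →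
      ψ p = ψ q → p = q)
    (E' : Finset (Fin (n + a + c) × (T ⊕ Fin (a + c))))
    (hE' : E' = E.image (fun e => (φ e.1, Sum.inl e.2)) ∪
      (Finset.univ.filter (fun p => p ∉ Finset.univ.image φ)).image
        (fun p => (p, Sum.inr (ψ p)))) :
    (∃ M', PerfectDDM n E' M') ↔
      (∃ M ⊆ E, M.card = n ∧ IsMatching (M.filter (fun e => e.1 ∈ S₁)) ∧
        IsMatching (M.filter (fun e => e.1 ∈ S₂))) := by
  have hnabc : n = a + b + c := by
    have e1 := Finset.card_sdiff_add_card_inter S₁ S₂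
    have e2 := Finset.card_sdiff_add_card S₂ S₁
    rw [Finset.union_comm, hU, Finset.card_univ] at e2
    omega
  have hcov : ∀ s, s ∈ S₁ ∨ s ∈ S₂ := fun s => by
    have := Finset.mem_univ s
    rw [← hU] at this
    exact Finset.mem_union.mp this
  have hp1 : ∀ s ∈ S₁, (φ s).val < n := by
    intro s hs
    by_cases h : s ∈ S₂
    · have := hφ2 s (by simp [hs, h]); omega
    · have := hφ1 s (by simp [hs, h]); omega
  have hp2 : ∀ s ∈ S₂, a + c ≤ (φ s).val := by
    intro s hs
    by_cases h : s ∈ S₁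
    · have := hφ2 s (by simp [hs, h]); omega
    · have := hφ3 s (by simp [hs, h]); omega
  have hold : ∀ s t, (φ s, Sum.inl t) ∈ E' ↔ (s, t) ∈ E := by
    intro s t
    rw [hE']
    simp only [Finset.mem_union, Finset.mem_image, Prod.mk.injEq, Sum.inl.injEq, reduceCtorEq,
      and_false, exists_false, or_false]
    constructor
    · rintro ⟨⟨s', t'⟩, he, h, rfl⟩
      rw [← hφ h]; exact he
    · intro h; exact ⟨(s, t), h, rfl, rfl⟩
  constructor
  · rintro ⟨M', ⟨hsub, hfun, hdist⟩, hperf⟩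
    have key : ∀ R : Finset S, (∀ s ∈ R, ∀ s' ∈ R, Nat.dist (φ s).val (φ s').val < n) →
        IsMatching ((E.filter (fun e => (φ e.1, Sum.inl e.2) ∈ M')).filter (fun e => e.1 ∈ R)) := by
      rintro R hR ⟨s, t⟩ he ⟨s', t'⟩ hf hne
      simp only [Finset.mem_filter] at he hf
      constructor
      · rintro h
        have := hfun _ he.1.2 _ hf.1.2 (by simpa using congrArg φ h)
        simp only [Prod.mk.injEq, Sum.inl.injEq] at this
        exact hne (Prod.ext h this.2)
      · intro h
        have h3 := hdist _ he.1.2 _ hf.1.2 (by simpa using h) (by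
          intro h'
          simp only [Prod.mk.injEq, Sum.inl.injEq] at h'
          exact hne (Prod.ext (hφ h'.1) h'.2))
        have := hR s he.2 s' hf.2
        simp only at h3
        omega
    refine ⟨E.filter (fun e => (φ e.1, Sum.inl e.2) ∈ M'), Finset.filter_subset _ _, ?_, ?_, ?_⟩
    · refine Eq.trans ?_ (Finset.card_univ.trans hn.symm)
      refine Finset.card_bij (fun e _ => e.1) (by simp) ?_ ?_
      · rintro ⟨s, t⟩ he ⟨s', t'⟩ hf h
        simp only [Finset.mem_filter] at he hf
        have := hfun _ he.2 _ hf.2 (by simpa using congrArg φ h)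
        simp only [Prod.mk.injEq, Sum.inl.injEq] at this
        exact Prod.ext h this.2
      · intro s _
        obtain ⟨t, ht⟩ := hperf (φ s)
        have hE := hsub ht
        cases t with
        | inl t => exact ⟨(s, t), by simp [ht, (hold s t).1 hE], rfl⟩
        | inr x => rw [hE'] at hE; simp at hE; exact absurd rfl (hE.1 s)
    · apply key
      intro s hs s' hs'
      have := hp1 s hs
      have := hp1 s' hs'
      unfold Nat.dist; omega
    · apply key
      intro s hs s' hs'
      have := hp2 s hs
      have := hp2 s' hs'
      have := (φ s).isLt
      have := (φ s').isLt
      unfold Nat.dist; omega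
  · rintro ⟨M, hME, hcard, hM1, hM2⟩
    have hinj : ∀ e ∈ M, ∀ f ∈ M, e.1 = f.1 → e = f := by
      intro e he f hf h
      by_contra hne
      rcases hcov e.1 with h' | h'
      · exact (hM1 e (by simp [he, h']) f (by simp [hf, ← h, h']) hne).1 h
      · exact (hM2 e (by simp [he, h']) f (by simp [hf, ← h, h']) hne).1 h
    have himg : M.image Prod.fst = Finset.univ := by
      apply Finset.eq_univ_of_card
      rw [Finset.card_image_of_injOn, hcard, hn]
      intro e he f hf h
      exact hinj e he f hf h
    have hfar : ∀ e ∈ M, ∀ f ∈ M, e.2 = f.2 → e ≠ f →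
        n ≤ Nat.dist (φ e.1).val (φ f.1).val := by
      intro e he f hf h hne
      have n1 : ¬ (e.1 ∈ S₁ ∧ f.1 ∈ S₁) := fun h' =>
        (hM1 e (by simp [he, h'.1]) f (by simp [hf, h'.2]) hne).2 h
      have n2 : ¬ (e.1 ∈ S₂ ∧ f.1 ∈ S₂) := fun h' =>
        (hM2 e (by simp [he, h'.1]) f (by simp [hf, h'.2]) hne).2 h
      have c1 := hcov e.1
      have c2 := hcov f.1
      by_cases h' : e.1 ∈ S₁
      · have a1 : f.1 ∉ S₁ := fun x => n1 ⟨h', x⟩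
        have a2 : f.1 ∈ S₂ := c2.resolve_left a1
        have a3 : e.1 ∉ S₂ := fun x => n2 ⟨x, a2⟩
        have := hφ1 e.1 (by simp [h', a3])
        have := hφ3 f.1 (by simp [a1, a2])
        unfold Nat.dist; omega
      · have a1 : e.1 ∈ S₂ := c1.resolve_left h'
        have a2 : f.1 ∉ S₂ := fun x => n2 ⟨a1, x⟩
        have a3 : f.1 ∈ S₁ := c2.resolve_right a2
        have := hφ3 e.1 (by simp [h', a1])
        have := hφ1 f.1 (by simp [a3, a2])
        unfold Nat.dist; omega
    refine ⟨M.image (fun e => (φ e.1, Sum.inl e.2)) ∪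
      (Finset.univ.filter (fun p => p ∉ Finset.univ.image φ)).image
        (fun p => (p, Sum.inr (ψ p))), ⟨?_, ?_, ?_⟩, ?_⟩
    · rw [hE']
      exact Finset.union_subset_union_left (Finset.image_subset_image hME)
    · intro e he f hf h
      rw [Finset.mem_union, Finset.mem_image, Finset.mem_image] at he hf
      rcases he with ⟨x, hx, rfl⟩ | ⟨x, hx, rfl⟩ <;> rcases hf with ⟨y, hy, rfl⟩ | ⟨y, hy, rfl⟩
      · rw [hinj x hx y hy (hφ h)]
      · simp only at h; subst h; simp at hy; exact absurd rfl (hy _)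
      · simp only at h; subst h; simp at hx; exact absurd rfl (hx _)
      · simp only at h; subst h; rfl
    · intro e he f hf h hne
      rw [Finset.mem_union, Finset.mem_image, Finset.mem_image] at he hf
      rcases he with ⟨x, hx, rfl⟩ | ⟨x, hx, rfl⟩ <;> rcases hf with ⟨y, hy, rfl⟩ | ⟨y, hy, rfl⟩
      · exact hfar x hx y hy (by simpa using h) (fun h' => hne (by rw [h']))
      · simp at h
      · simp at h
      · exact absurd (by rw [hψ x y (Finset.mem_filter.mp hx).2 (Finset.mem_filter.mp hy).2
          (by simpa using h)]) hne
    · intro i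
      by_cases hi : i ∈ Finset.univ.image φ
      · obtain ⟨s, _, rfl⟩ := Finset.mem_image.mp hi
        have hs : s ∈ M.image Prod.fst := by rw [himg]; simp
        obtain ⟨e, he, rfl⟩ := Finset.mem_image.mp hs
        exact ⟨Sum.inl e.2, Finset.mem_union_left _ (Finset.mem_image.mpr ⟨e, he, rfl⟩)⟩
      · exact ⟨Sum.inr (ψ i), Finset.mem_union_right _ (Finset.mem_image.mpr
          ⟨i, Finset.mem_filter.mpr ⟨Finset.mem_univ _, hi⟩, rfl⟩)⟩
end

section
/- With the block construction below, each Mᵢ (i = 1,…,2d−1) is a feasible d-distance matching of the extended cyclic instance, and the maximum-weight one M_{i*} satisfies w(M*) ≤ (2 − 1/d)·w(M_{i*}) for every d-distance matching M* of the instance; equivalently, d·w(M*) ≤ Σ_{i=1}^{2d−1} w(Mᵢ) ≤ (2d−1)·w(M_{i*}). -/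
open Finset

/-- `M` is a cyclic `d`-distance matching: every node of the cyclically ordered set
`Fin N` is incident to at most one edge of `M`, and any two distinct edges at the same
`T`-node have cyclic distance at least `d`. -/
def CyclicDDM {N : ℕ} {T : Type*} [DecidableEq T] (d : ℕ)
    (E M : Finset (Fin N × T)) : Prop :=
  M ⊆ E ∧ (∀ e ∈ M, ∀ f ∈ M, e.1 = f.1 → e = f) ∧
    (∀ e ∈ M, ∀ f ∈ M, e.2 = f.2 → e ≠ f →
      d ≤ min (Nat.dist e.1.val f.1.val) (N - Nat.dist e.1.val f.1.val))

/-- `R_d(p)`: the node `p` together with the next `d − 1` nodes in cyclic order. -/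
def cyclicBlock {N : ℕ} (d : ℕ) (p : Fin N) : Finset (Fin N) :=
  Finset.univ.filter (fun q => (q.val + N - p.val) % N < d)

/-- The edge set of `H_p`, the subgraph induced by `R_d(p) ∪ T`. -/
def blockEdges {N : ℕ} {T : Type*} [DecidableEq T] (d : ℕ)
    (E : Finset (Fin N × T)) (p : Fin N) : Finset (Fin N × T) :=
  E.filter (fun e => e.1 ∈ cyclicBlock d p)

theorem aux_mod {N : ℕ} (p q : Fin N) :
    (p.val ≤ q.val ∧ (q.val + N - p.val) % N = q.val - p.val) ∨
    (q.val < p.val ∧ (q.val + N - p.val) % N = q.val + N - p.val) := by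
  have hp := p.isLt
  have hq := q.isLt
  rcases le_or_gt p.val q.val with h | h
  · left
    refine ⟨h, ?_⟩
    have : q.val + N - p.val = (q.val - p.val) + N := by omega
    rw [this, Nat.add_mod_right, Nat.mod_eq_of_lt (by omega)]
  · right
    exact ⟨h, Nat.mod_eq_of_lt (by omega)⟩

theorem aux_far {N d : ℕ} (hd : 1 ≤ d) (p p' q q' : Fin N) (h1 : p.val + (2 * d - 1) ≤ p'.val)
    (h2 : p'.val + (2 * d - 1) ≤ p.val + N) (hq : q ∈ cyclicBlock d p)
    (hq' : q' ∈ cyclicBlock d p') :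
    d ≤ min (Nat.dist q.val q'.val) (N - Nat.dist q.val q'.val) := by
  simp only [cyclicBlock, mem_filter, mem_univ, true_and] at hq hq'
  have := p.isLt
  have := p'.isLt
  have := q.isLt
  have := q'.isLt
  unfold Nat.dist
  rcases aux_mod p q with h | h <;> rcases aux_mod p' q' with h' | h' <;>
    rw [h.2] at hq <;> rw [h'.2] at hq' <;> omega

theorem aux_near {N d : ℕ} (p q q' : Fin N) (hq : q ∈ cyclicBlock d p)
    (hq' : q' ∈ cyclicBlock d p) :
    min (Nat.dist q.val q'.val) (N - Nat.dist q.val q'.val) < d := by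
  simp only [cyclicBlock, mem_filter, mem_univ, true_and] at hq hq'
  have := p.isLt
  have := q.isLt
  have := q'.isLt
  unfold Nat.dist
  rcases aux_mod p q with h | h <;> rcases aux_mod p q' with h' | h' <;>
    rw [h.2] at hq <;> rw [h'.2] at hq' <;> omega

theorem aux_card {N d : ℕ} (hdN : d ≤ N) (q : Fin N) :
    d ≤ (Finset.univ.filter (fun p : Fin N => q ∈ cyclicBlock d p)).card := by
  have hq := q.isLt
  have key : ∀ x < d, ∃ p : Fin N, (q.val + N - p.val) % N = x := by
    intro x hx
    rcases le_or_gt x q.val with h | h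
    · refine ⟨⟨q.val - x, by omega⟩, ?_⟩
      rcases aux_mod ⟨q.val - x, by omega⟩ q with h' | h' <;> simp only at h' ⊢ <;> omega
    · refine ⟨⟨q.val + N - x, by omega⟩, ?_⟩
      rcases aux_mod ⟨q.val + N - x, by omega⟩ q with h' | h' <;> simp only at h' ⊢ <;> omega
  have hsub : Finset.range d ⊆ (Finset.univ.filter
      (fun p : Fin N => q ∈ cyclicBlock d p)).image (fun p => (q.val + N - p.val) % N) := by
    intro x hx
    have hx := Finset.mem_range.1 hx
    obtain ⟨p, hp⟩ := key x hx
    refine Finset.mem_image.2 ⟨p, ?_, hp⟩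
    simp only [cyclicBlock, mem_filter, mem_univ, true_and]
    omega
  calc d = (Finset.range d).card := (Finset.card_range d).symm
    _ ≤ _ := Finset.card_le_card hsub
    _ ≤ _ := Finset.card_image_le

theorem aux_sum (g : ℕ → ℝ) (D m : ℕ) :
    ∑ i ∈ Finset.range D, ∑ j ∈ Finset.range m, g (i + j * D) = ∑ x ∈ Finset.range (m * D), g x := by
  rw [Finset.sum_comm]
  induction m with
  | zero => simp
  | succ m ih =>
    rw [Finset.sum_range_succ, ih, Nat.succ_mul, Finset.sum_range_add]
    congr 1
    exact Finset.sum_congr rfl fun i _ => by rw [add_comm]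

/-- The block construction: append `k` isolated dummy nodes (with `d−1 ≤ k ≤ 3d−3` and
`2d−1 ∣ n+k`), regard the `n+k` nodes of `S` cyclically, let `F p` be a maximum-weight
matching of the block `H_p`, and let `M i` be the union of the `F`'s over the block
starts congruent to `i` modulo `2d−1`. Then each `M i` is a feasible cyclic `d`-distance
matching, and the heaviest one, `M i*`, satisfies
`d·w(M*) ≤ Σ_i w(M i) ≤ (2d−1)·w(M i*)`, hence `w(M*) ≤ (2 − 1/d)·w(M i*)` for every
cyclic `d`-distance matching `M*`. -/
theorem stmt11 {T : Type*} [DecidableEq T]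
    (n k d : ℕ) (hd : 1 ≤ d) (hk1 : d - 1 ≤ k) (hk2 : k ≤ 3 * d - 3)
    (hdvd : (2 * d - 1) ∣ (n + k)) (hN : 0 < n + k)
    (E : Finset (Fin (n + k) × T)) (hdummy : ∀ e ∈ E, e.1.val < n)
    (w : Fin (n + k) × T → ℝ) (hw : ∀ e ∈ E, 0 ≤ w e)
    (F : Fin (n + k) → Finset (Fin (n + k) × T))
    (hF1 : ∀ p, F p ⊆ blockEdges d E p)
    (hF2 : ∀ p, IsMatching (F p))
    (hF3 : ∀ p, ∀ F' ⊆ blockEdges d E p, IsMatching F' → ∑ e ∈ F', w e ≤ ∑ e ∈ F p, w e)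
    (M : ℕ → Finset (Fin (n + k) × T))
    (hM : ∀ i, M i = (Finset.range ((n + k) / (2 * d - 1))).biUnion
      (fun j => F ⟨(i + j * (2 * d - 1)) % (n + k), Nat.mod_lt _ hN⟩)) :
    (∀ i < 2 * d - 1, CyclicDDM d E (M i)) ∧
    (∀ istar < 2 * d - 1, (∀ i < 2 * d - 1, ∑ e ∈ M i, w e ≤ ∑ e ∈ M istar, w e) →
      ∀ Ms, CyclicDDM d E Ms →
        (d : ℝ) * ∑ e ∈ Ms, w e ≤ ∑ i ∈ Finset.range (2 * d - 1), ∑ e ∈ M i, w e ∧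
        ∑ i ∈ Finset.range (2 * d - 1), ∑ e ∈ M i, w e
          ≤ (2 * (d : ℝ) - 1) * ∑ e ∈ M istar, w e ∧
        ∑ e ∈ Ms, w e ≤ (2 - 1 / (d : ℝ)) * ∑ e ∈ M istar, w e) := by
  have hD : 0 < 2 * d - 1 := by omega
  obtain ⟨m, hm⟩ := hdvd
  have hdiv : (n + k) / (2 * d - 1) = m := by rw [hm]; exact Nat.mul_div_cancel_left _ hD
  rw [hdiv] at hM
  have hm0 : 0 < m := by
    rcases Nat.eq_zero_or_pos m with h | h
    · subst h; simp at hm; omega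
    · exact h
  have hDN : 2 * d - 1 ≤ n + k := by rw [hm]; exact Nat.le_mul_of_pos_right _ hm0
  have hblk : ∀ p, ∀ e ∈ F p, e ∈ E ∧ e.1 ∈ cyclicBlock d p := fun p e he => by
    simpa [blockEdges] using hF1 p he
  have hlt : ∀ i < 2 * d - 1, ∀ j < m, i + j * (2 * d - 1) < n + k := by
    intro i hi j hj
    have := Nat.mul_le_mul_right (2 * d - 1) (Nat.succ_le_of_lt hj)
    rw [Nat.succ_mul] at this
    rw [hm, mul_comm _ m]; omega
  have hfar' : ∀ i < 2 * d - 1, ∀ j < m, ∀ j' < m, j < j' →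
      ∀ e ∈ F ⟨(i + j * (2 * d - 1)) % (n + k), Nat.mod_lt _ hN⟩,
      ∀ f ∈ F ⟨(i + j' * (2 * d - 1)) % (n + k), Nat.mod_lt _ hN⟩,
      d ≤ min (Nat.dist e.1.val f.1.val) (n + k - Nat.dist e.1.val f.1.val) := by
    intro i hi j hj j' hj' hjj e he f hf
    refine aux_far hd _ _ _ _ ?_ ?_ (hblk _ e he).2 (hblk _ f hf).2
    · simp only [Nat.mod_eq_of_lt (hlt i hi j hj), Nat.mod_eq_of_lt (hlt i hi j' hj')]
      have := Nat.mul_le_mul_right (2 * d - 1) (Nat.succ_le_of_lt hjj)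
      rw [Nat.succ_mul] at this
      omega
    · simp only [Nat.mod_eq_of_lt (hlt i hi j hj), Nat.mod_eq_of_lt (hlt i hi j' hj')]
      have := Nat.mul_le_mul_right (2 * d - 1) (Nat.succ_le_of_lt hj')
      rw [Nat.succ_mul, mul_comm m, ← hm] at this
      omega
  have hfar : ∀ i < 2 * d - 1, ∀ j < m, ∀ j' < m, j ≠ j' →
      ∀ e ∈ F ⟨(i + j * (2 * d - 1)) % (n + k), Nat.mod_lt _ hN⟩,
      ∀ f ∈ F ⟨(i + j' * (2 * d - 1)) % (n + k), Nat.mod_lt _ hN⟩,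
      d ≤ min (Nat.dist e.1.val f.1.val) (n + k - Nat.dist e.1.val f.1.val) := by
    intro i hi j hj j' hj' hjj e he f hf
    rcases lt_or_gt_of_ne hjj with h | h
    · exact hfar' i hi j hj j' hj' h e he f hf
    · rw [Nat.dist_comm]
      exact hfar' i hi j' hj' j hj h f hf e he
  refine ⟨?_, ?_⟩
  · intro i hi
    rw [hM]
    refine ⟨?_, ?_, ?_⟩
    · intro e he
      obtain ⟨j, -, he⟩ := Finset.mem_biUnion.1 he
      exact (hblk _ e he).1
    · intro e he f hf hef
      obtain ⟨j, hj, he⟩ := Finset.mem_biUnion.1 he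
      obtain ⟨j', hj', hf⟩ := Finset.mem_biUnion.1 hf
      by_cases h : j = j'
      · subst h
        by_contra hne
        exact (hF2 _ e he f hf hne).1 hef
      · have := hfar i hi j (Finset.mem_range.1 hj) j' (Finset.mem_range.1 hj') h e he f hf
        rw [hef, Nat.dist_self] at this
        omega
    · intro e he f hf hef hne
      obtain ⟨j, hj, he⟩ := Finset.mem_biUnion.1 he
      obtain ⟨j', hj', hf⟩ := Finset.mem_biUnion.1 hf
      by_cases h : j = j'
      · subst h
        exact absurd hef (hF2 _ e he f hf hne).2
      · exact hfar i hi j (Finset.mem_range.1 hj) j' (Finset.mem_range.1 hj') h e he f hf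
  · intro istar _ hmax Ms hMs
    obtain ⟨hsub, hs, ht⟩ := hMs
    have hsumM : ∑ i ∈ Finset.range (2 * d - 1), ∑ e ∈ M i, w e = ∑ p, ∑ e ∈ F p, w e := by
      have h1 : ∀ i ∈ Finset.range (2 * d - 1), ∑ e ∈ M i, w e =
          ∑ j ∈ Finset.range m, (fun x => ∑ e ∈ F ⟨x % (n + k), Nat.mod_lt _ hN⟩, w e)
            (i + j * (2 * d - 1)) := by
        intro i hi
        rw [hM, Finset.sum_biUnion]
        intro j hj j' hj' hne
        refine Finset.disjoint_left.2 fun e he he' => ?_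
        have := hfar i (Finset.mem_range.1 hi) j (by simpa using hj) j' (by simpa using hj')
          hne e he e he'
        rw [Nat.dist_self] at this
        omega
      refine (Finset.sum_congr rfl h1).trans ((aux_sum
        (fun x => ∑ e ∈ F ⟨x % (n + k), Nat.mod_lt _ hN⟩, w e) _ _).trans ?_)
      rw [mul_comm, ← hm, Finset.sum_range]
      refine Finset.sum_congr rfl fun p _ => ?_
      have : (⟨p.val % (n + k), Nat.mod_lt _ hN⟩ : Fin (n + k)) = p :=
        Fin.ext (Nat.mod_eq_of_lt p.isLt)
      simp only [this]
    have hA : (d : ℝ) * ∑ e ∈ Ms, w e ≤ ∑ i ∈ Finset.range (2 * d - 1), ∑ e ∈ M i, w e := by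
      rw [hsumM]
      calc (d : ℝ) * ∑ e ∈ Ms, w e
          ≤ ∑ e ∈ Ms, ∑ p : Fin (n + k), if e.1 ∈ cyclicBlock d p then w e else 0 := by
            rw [Finset.mul_sum]
            refine Finset.sum_le_sum fun e he => ?_
            rw [← Finset.sum_filter, Finset.sum_const, nsmul_eq_mul]
            refine mul_le_mul_of_nonneg_right ?_ (hw e (hsub he))
            exact_mod_cast aux_card (by omega) e.1
        _ = ∑ p : Fin (n + k), ∑ e ∈ Ms with e.1 ∈ cyclicBlock d p, w e := by
            rw [Finset.sum_comm]
            exact Finset.sum_congr rfl fun p _ => by rw [Finset.sum_filter]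
        _ ≤ _ := by
            refine Finset.sum_le_sum fun p _ => hF3 p _ ?_ ?_
            · exact Finset.filter_subset_filter _ hsub
            · intro e he f hf hne
              rw [Finset.mem_filter] at he hf
              refine ⟨fun h => hne (hs e he.1 f hf.1 h), fun h => ?_⟩
              have h1 := ht e he.1 f hf.1 h hne
              have h2 := aux_near p e.1 f.1 he.2 hf.2
              omega
    have hB : ∑ i ∈ Finset.range (2 * d - 1), ∑ e ∈ M i, w e
          ≤ (2 * (d : ℝ) - 1) * ∑ e ∈ M istar, w e := by
      have := Finset.sum_le_card_nsmul (Finset.range (2 * d - 1)) (fun i => ∑ e ∈ M i, w e) _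
        (fun i hi => hmax i (Finset.mem_range.1 hi))
      rw [Finset.card_range, nsmul_eq_mul, Nat.cast_sub (by omega)] at this
      push_cast at this
      exact this
    refine ⟨hA, hB, ?_⟩
    have hd0 : (0 : ℝ) < d := by exact_mod_cast hd
    have h3 := hA.trans hB
    refine le_of_mul_le_mul_left (h3.trans (le_of_eq ?_)) hd0
    field_simp
end

section
/- If an instance of the d-distance matching problem is r-regular for some r ≥ 1, then G has a perfect d-distance matching. -/
open Finset

/-- `M` (a set of abstract edges with endpoint map `ep`, so parallel edges are allowed)
is a perfect `d`-distance matching: every node of `S = Fin n` is incident to exactly one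
edge of `M`, and two distinct edges of `M` at the same `T`-node have their `S`-nodes at
distance at least `d`. -/
def PerfectDDMm {n : ℕ} {T ι : Type*} (d : ℕ) (ep : ι → Fin n × T) (M : Finset ι) : Prop :=
  (∀ s : Fin n, ∃! e, e ∈ M ∧ (ep e).1 = s) ∧
  (∀ e ∈ M, ∀ f ∈ M, (ep e).2 = (ep f).2 → e ≠ f →
    d ≤ Nat.dist (ep e).1.val (ep f).1.val)

/-- If an instance of the `d`-distance matching problem is `r`-regular — every `s ∈ S`
has degree `r`, and for every `t ∈ T` and every window `R_d(s_i)` (`1 ≤ i ≤ n − d + 1`)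
the number of edges between `t` and `R_d(s_i)` is `r` — then a perfect `d`-distance
matching exists. -/
theorem stmt18 {n : ℕ} {T ι : Type*} [DecidableEq T] [DecidableEq ι] [Fintype ι]
    (d r : ℕ) (hd : 1 ≤ d) (hdn : d ≤ n) (hr : 1 ≤ r)
    (ep : ι → Fin n × T)
    (hdeg : ∀ s : Fin n, (Finset.univ.filter (fun e => (ep e).1 = s)).card = r)
    (hreg : ∀ t : T, ∀ i : ℕ, i + d ≤ n →
      (Finset.univ.filter
        (fun e => (ep e).2 = t ∧ i ≤ (ep e).1.val ∧ (ep e).1.val < i + d)).card = r) :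
    ∃ M : Finset ι, PerfectDDMm d ep M := by
  classical
  have step : ∀ (i : ℕ) (t : T) (h : i + d < n),
      (∃ e, (ep e).1.val = i ∧ (ep e).2 = t) → ∃ e, (ep e).1.val = i + d ∧ (ep e).2 = t := by
    rintro i t h ⟨e, he, het⟩
    by_contra! hcon
    have h1 := hreg t i (by omega)
    have h2 := hreg t (i + 1) (by omega)
    have hlt : (Finset.univ.filter
        (fun e => (ep e).2 = t ∧ i + 1 ≤ (ep e).1.val ∧ (ep e).1.val < i + 1 + d)).card <
        (Finset.univ.filter
        (fun e => (ep e).2 = t ∧ i ≤ (ep e).1.val ∧ (ep e).1.val < i + d)).card := by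
      apply Finset.card_lt_card
      rw [Finset.ssubset_iff_of_subset]
      · refine ⟨e, ?_, ?_⟩
        · simp only [Finset.mem_filter, Finset.mem_univ, true_and]
          exact ⟨het, by omega, by omega⟩
        · simp only [Finset.mem_filter, Finset.mem_univ, true_and]
          rintro ⟨-, h3, -⟩
          omega
      · intro x hx
        simp only [Finset.mem_filter, Finset.mem_univ, true_and] at hx ⊢
        obtain ⟨a, b, c⟩ := hx
        have : (ep x).1.val ≠ i + d := fun hh => hcon x hh a
        exact ⟨a, by omega, by omega⟩
    omega
  have per : ∀ (k i : ℕ) (t : T), i + d * k < n →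
      (∃ e, (ep e).1.val = i ∧ (ep e).2 = t) →
      ∃ e, (ep e).1.val = i + d * k ∧ (ep e).2 = t := by
    intro k
    induction k with
    | zero => intro i t _ h; simpa using h
    | succ k ih =>
      intro i t h he
      rw [Nat.mul_succ, ← Nat.add_assoc] at h ⊢
      exact step _ t h (ih i t (by omega) he)
  let N : Fin d → Finset T := fun s =>
    (Finset.univ.filter (fun e => (ep e).1.val = s.val)).image (fun e => (ep e).2)
  have hall : ∀ A : Finset (Fin d), A.card ≤ (A.biUnion N).card := by
    intro A
    have hE : (Finset.univ.filter (fun e => ∃ s ∈ A, (ep e).1.val = s.val)).card = A.card * r := by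
      have : Finset.univ.filter (fun e => ∃ s ∈ A, (ep e).1.val = s.val)
          = A.biUnion (fun s => Finset.univ.filter (fun e => (ep e).1 = Fin.castLE hdn s)) := by
        ext e
        simp [Fin.ext_iff]
      rw [this, Finset.card_biUnion, Finset.sum_congr rfl (fun s _ => hdeg (Fin.castLE hdn s))]
      · simp
      · intro a _ b _ hab
        rw [Function.onFun, Finset.disjoint_left]
        intro e h1 h2
        simp only [Finset.mem_filter, Finset.mem_univ, true_and] at h1 h2
        rw [h1] at h2
        exact hab (Fin.castLE_injective hdn h2)
    have hF : (Finset.univ.filter (fun e => ∃ s ∈ A, (ep e).1.val = s.val)).card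
        ≤ (A.biUnion N).card * r := by
      refine (Finset.card_le_card (t := (A.biUnion N).biUnion (fun t => Finset.univ.filter
        (fun e => (ep e).2 = t ∧ 0 ≤ (ep e).1.val ∧ (ep e).1.val < 0 + d))) ?_).trans ?_
      · intro e he
        simp only [Finset.mem_filter, Finset.mem_univ, true_and] at he
        obtain ⟨s, hs, h⟩ := he
        simp only [Finset.mem_biUnion, Finset.mem_filter, Finset.mem_univ, true_and]
        refine ⟨(ep e).2, ⟨s, hs, ?_⟩, rfl, by omega, by omega⟩
        exact Finset.mem_image.2 ⟨e, by simpa using h, rfl⟩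
      · apply Finset.card_biUnion_le_card_mul
        intro t _
        exact (hreg t 0 (by omega)).le
    rw [hE] at hF
    exact Nat.le_of_mul_le_mul_right hF hr
  obtain ⟨f, hinj, hf⟩ := (Finset.all_card_le_biUnion_card_iff_exists_injective N).1 hall
  have ex : ∀ s : Fin n, ∃ e, (ep e).1 = s ∧ (ep e).2 = f ⟨s.val % d, Nat.mod_lt _ hd⟩ := by
    intro s
    have hm := Nat.mod_add_div s.val d
    obtain ⟨e, he, he2⟩ := Finset.mem_image.1 (hf ⟨s.val % d, Nat.mod_lt _ hd⟩)
    obtain ⟨e', h1, h2⟩ := per (s.val / d) (s.val % d) (f ⟨s.val % d, Nat.mod_lt _ hd⟩)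
      (by rw [hm]; exact s.2) ⟨e, by simpa using he, he2⟩
    exact ⟨e', Fin.ext (by rw [h1, hm]), h2⟩
  choose g hg1 hg2 using ex
  refine ⟨Finset.univ.image g, ?_, ?_⟩
  · intro s
    refine ⟨g s, ⟨by simp, hg1 s⟩, ?_⟩
    rintro e ⟨he, hes⟩
    obtain ⟨s', -, rfl⟩ := Finset.mem_image.1 he
    rw [hg1] at hes
    rw [hes]
  · intro e he e' he' ht hne
    obtain ⟨s, -, rfl⟩ := Finset.mem_image.1 he
    obtain ⟨s', -, rfl⟩ := Finset.mem_image.1 he'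
    rw [hg2, hg2] at ht
    have hmod : s.val % d = s'.val % d := by simpa using hinj ht
    have hss : s.val ≠ s'.val := fun h => hne (by rw [Fin.ext h])
    rw [hg1, hg1]
    rcases Nat.lt_or_gt_of_ne hss with h | h
    · rw [Nat.dist_eq_sub_of_le h.le]
      exact Nat.le_of_dvd (by omega) ((Nat.modEq_iff_dvd' h.le).1 hmod)
    · rw [Nat.dist_comm, Nat.dist_eq_sub_of_le (le_of_lt h)]
      exact Nat.le_of_dvd (by omega) ((Nat.modEq_iff_dvd' (le_of_lt h)).1 hmod.symm)
end

section
/- If an instance of the d-distance matching problem is r-regular for some r ≥ 1, then the edge set E partitions into r perfect d-distance matchings. -/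
open Finset

theorem aux_konig {A B ι : Type*} [Fintype A] [Fintype B] [DecidableEq A] [DecidableEq B]
    [DecidableEq ι] (a : ι → A) (b : ι → B) (r : ℕ) : ∀ E : Finset ι,
    (∀ x, (E.filter (fun e => a e = x)).card = r) →
    (∀ y, (E.filter (fun e => b e = y)).card = r) →
    ∃ f : ι → ℕ, (∀ e ∈ E, f e < r) ∧
      (∀ e ∈ E, ∀ e' ∈ E, f e = f e' → a e = a e' → e = e') ∧
      (∀ e ∈ E, ∀ e' ∈ E, f e = f e' → b e = b e' → e = e') := by
  induction r with
  | zero =>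
    intro E hA hB
    have hE : ∀ e, e ∉ E := by
      intro e he
      have := hA (a e)
      rw [Finset.card_eq_zero, Finset.filter_eq_empty_iff] at this
      exact this he rfl
    exact ⟨fun _ => 0, fun e he => absurd he (hE e), fun e he => absurd he (hE e),
      fun e he => absurd he (hE e)⟩
  | succ r ih =>
    intro E hA hB
    have cA : ∀ X : Finset A, (E.filter (fun e => a e ∈ X)).card = X.card * (r+1) := by
      intro X
      rw [Finset.card_eq_sum_card_fiberwise (f := a) (t := X) (fun e he => by simpa using (Finset.mem_filter.1 he).2)]
      rw [← smul_eq_mul, ← Finset.sum_const]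
      refine Finset.sum_congr rfl fun x hx => ?_
      rw [← hA x, Finset.filter_filter]
      congr 1
      ext e; simp only [Finset.mem_filter]; grind
    have cB : ∀ X : Finset B, (E.filter (fun e => b e ∈ X)).card = X.card * (r+1) := by
      intro X
      rw [Finset.card_eq_sum_card_fiberwise (f := b) (t := X) (fun e he => by simpa using (Finset.mem_filter.1 he).2)]
      rw [← smul_eq_mul, ← Finset.sum_const]
      refine Finset.sum_congr rfl fun x hx => ?_
      rw [← hB x, Finset.filter_filter]
      congr 1
      ext e; simp only [Finset.mem_filter]; grind
    have hcard : Fintype.card A = Fintype.card B := by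
      have h1 := cA Finset.univ
      have h2 := cB Finset.univ
      simp only [Finset.mem_univ, Finset.filter_true] at h1 h2
      have : (Finset.univ : Finset A).card = (Finset.univ : Finset B).card :=
        Nat.eq_of_mul_eq_mul_right (Nat.succ_pos r) (h1.symm.trans h2)
      simpa using this
    obtain ⟨g, hg, hg2⟩ := (Finset.all_card_le_biUnion_card_iff_exists_injective
      (fun x => (E.filter (fun e => a e = x)).image b)).1 (by
        intro X
        refine Nat.le_of_mul_le_mul_right ?_ (Nat.succ_pos r)
        rw [← Nat.succ_eq_add_one] at cA cB
        rw [← cA, ← cB]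
        refine Finset.card_le_card fun e he => ?_
        simp only [Finset.mem_filter, Finset.mem_biUnion, Finset.mem_image] at he ⊢
        exact ⟨he.1, a e, he.2, e, ⟨he.1, rfl⟩, rfl⟩)
    have hbij : Function.Bijective g := (Fintype.bijective_iff_injective_and_card g).2 ⟨hg, hcard⟩
    simp only [Finset.mem_image, Finset.mem_filter] at hg2
    choose m hm using hg2
    have mA : ∀ x, a (m x) = x := fun x => (hm x).1.2
    have mB : ∀ x, b (m x) = g x := fun x => (hm x).2
    have mE : ∀ x, m x ∈ E := fun x => (hm x).1.1
    let M : Finset ι := Finset.univ.image m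
    have hM : ∀ e, e ∈ M ↔ ∃ x, m x = e := by intro e; simp [M]
    obtain ⟨f, f1, f2, f3⟩ := ih (E \ M) (by
        intro x
        have : (E \ M).filter (fun e => a e = x) = (E.filter (fun e => a e = x)).erase (m x) := by
          ext e
          simp only [Finset.mem_filter, Finset.mem_sdiff, Finset.mem_erase, hM]
          grind
        rw [this, Finset.card_erase_of_mem (by simp [mE, mA]), hA]; rfl) (by
        intro y
        obtain ⟨x, rfl⟩ := hbij.2 y
        have : (E \ M).filter (fun e => b e = g x) = (E.filter (fun e => b e = g x)).erase (m x) := by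
          ext e
          simp only [Finset.mem_filter, Finset.mem_sdiff, Finset.mem_erase, hM]
          have := @hg
          constructor
          · grind
          · rintro ⟨h1, h2, h3⟩
            refine ⟨⟨h2, ?_⟩, h3⟩
            rintro ⟨z, rfl⟩
            rw [mB] at h3
            exact h1 (by rw [hg h3])
        rw [this, Finset.card_erase_of_mem (by simp [mE, mB]), hB]; rfl)
    simp only [Finset.mem_sdiff] at f1 f2 f3
    refine ⟨fun e => if e ∈ M then r else f e, ?_, ?_, ?_⟩
    · intro e he
      by_cases h : e ∈ M
      · simp [h]
      · simp only [h, if_false]; have := f1 e ⟨he, h⟩; omega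
    · intro e he e' he' h h'
      by_cases h1 : e ∈ M <;> by_cases h2 : e' ∈ M <;> simp only [h1, h2, if_true, if_false] at h
      · obtain ⟨x, rfl⟩ := (hM _).1 h1
        obtain ⟨y, rfl⟩ := (hM _).1 h2
        rw [mA, mA] at h'; rw [h']
      · have := f1 e' ⟨he', h2⟩; omega
      · have := f1 e ⟨he, h1⟩; omega
      · exact f2 e ⟨he, h1⟩ e' ⟨he', h2⟩ h h'
    · intro e he e' he' h h'
      by_cases h1 : e ∈ M <;> by_cases h2 : e' ∈ M <;> simp only [h1, h2, if_true, if_false] at h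
      · obtain ⟨x, rfl⟩ := (hM _).1 h1
        obtain ⟨y, rfl⟩ := (hM _).1 h2
        rw [mB, mB] at h'; rw [hg h']
      · have := f1 e' ⟨he', h2⟩; omega
      · have := f1 e ⟨he, h1⟩; omega
      · exact f3 e ⟨he, h1⟩ e' ⟨he', h2⟩ h h'

/-- If an instance of the `d`-distance matching problem is `r`-regular — every `s ∈ S`
has degree `r`, and for every `t ∈ T` and every window `R_d(s_i)` (`1 ≤ i ≤ n − d + 1`)
the number of edges between `t` and `R_d(s_i)` is `r` — then the edge set partitions
into `r` perfect `d`-distance matchings. -/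
theorem stmt19 {n : ℕ} {T ι : Type*} [DecidableEq T] [DecidableEq ι] [Fintype ι]
    (d r : ℕ) (hd : 1 ≤ d) (hdn : d ≤ n) (hr : 1 ≤ r)
    (ep : ι → Fin n × T)
    (hdeg : ∀ s : Fin n, (Finset.univ.filter (fun e => (ep e).1 = s)).card = r)
    (hreg : ∀ t : T, ∀ i : ℕ, i + d ≤ n →
      (Finset.univ.filter
        (fun e => (ep e).2 = t ∧ i ≤ (ep e).1.val ∧ (ep e).1.val < i + d)).card = r) :
    ∃ P : Fin r → Finset ι,
      (∀ c, PerfectDDMm d ep (P c)) ∧ (∀ e : ι, ∃! c, e ∈ P c) := by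
  classical
  let cnt : T → ℕ → ℕ := fun t k =>
    (Finset.univ.filter (fun e => (ep e).2 = t ∧ (ep e).1.val = k)).card
  have hstep : ∀ t i, i + d < n → cnt t i = cnt t (i + d) := by
    intro t i hi
    have h1 := hreg t i (by omega)
    have h2 := hreg t (i+1) (by omega)
    let W := Finset.univ.filter
        (fun e => (ep e).2 = t ∧ i ≤ (ep e).1.val ∧ (ep e).1.val < i + 1 + d)
    have e1 : W.card = r + cnt t (i+d) := by
      rw [← h1, ← Finset.card_union_of_disjoint]
      · congr 1; ext e; simp only [W, Finset.mem_filter, Finset.mem_union, Finset.mem_univ, true_and]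
        constructor
        · rintro ⟨a, b, c⟩
          by_cases h : (ep e).1.val = i + d
          · exact Or.inr ⟨a, h⟩
          · exact Or.inl ⟨a, b, by omega⟩
        · rintro (⟨a, b, c⟩ | ⟨a, b⟩)
          · exact ⟨a, b, by omega⟩
          · exact ⟨a, by omega, by omega⟩
      · rw [Finset.disjoint_left]; intro e; simp only [Finset.mem_filter]; rintro ⟨_, _, _, h⟩ ⟨_, _, h'⟩; omega
    have e2 : W.card = r + cnt t i := by
      rw [← h2, ← Finset.card_union_of_disjoint]
      · congr 1; ext e; simp only [W, Finset.mem_filter, Finset.mem_union, Finset.mem_univ, true_and]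
        constructor
        · rintro ⟨a, b, c⟩
          by_cases h : (ep e).1.val = i
          · exact Or.inr ⟨a, h⟩
          · exact Or.inl ⟨a, by omega, by omega⟩
        · rintro (⟨a, b, c⟩ | ⟨a, b⟩)
          · exact ⟨a, by omega, by omega⟩
          · exact ⟨a, by omega, by omega⟩
      · rw [Finset.disjoint_left]; intro e; simp only [Finset.mem_filter]; rintro ⟨_, _, h, _⟩ ⟨_, _, h'⟩; omega
    omega
  have hper : ∀ t k, k < n → cnt t k = cnt t (k % d) := by
    intro t k
    induction k using Nat.strong_induction_on with
    | _ k ih =>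
      intro hk
      by_cases h : k < d
      · rw [Nat.mod_eq_of_lt h]
      · have h3 := hstep t (k - d) (by omega)
        rw [Nat.sub_add_cancel (by omega)] at h3
        rw [← h3, ih (k-d) (by omega) (by omega), Nat.mod_eq_sub_mod (by omega : d ≤ k)]
  have hψ : ∀ t k, ∃ p : Equiv.Perm ι, k < n → ∀ e,
      ((ep e).2 = t ∧ (ep e).1.val = k) ↔ ((ep (p e)).2 = t ∧ (ep (p e)).1.val = k % d) := by
    intro t k
    by_cases hk : k < n
    · have hc : Fintype.card {e // (ep e).2 = t ∧ (ep e).1.val = k} =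
          Fintype.card {e // (ep e).2 = t ∧ (ep e).1.val = k % d} := by
        rw [Fintype.card_subtype, Fintype.card_subtype]; exact hper t k hk
      let q := Fintype.equivOfCardEq hc
      refine ⟨q.extendSubtype, fun _ e => ⟨fun h => q.extendSubtype_mem e h, fun h => ?_⟩⟩
      by_contra h'
      exact q.extendSubtype_not_mem e h' h
    · exact ⟨1, fun h => absurd h hk⟩
  choose ψ hψ using hψ
  have hdp : 0 < d := hd
  let φ : ι → ι := fun e => ψ (ep e).2 (ep e).1.val e
  have φ1 : ∀ e, (ep (φ e)).2 = (ep e).2 ∧ (ep (φ e)).1.val = (ep e).1.val % d := fun e =>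
    (hψ (ep e).2 (ep e).1.val (ep e).1.isLt e).1 ⟨rfl, rfl⟩
  have φinj : ∀ e e', (ep e).1 = (ep e').1 → φ e = φ e' → e = e' := by
    intro e e' h h'
    have ht : (ep e).2 = (ep e').2 := by rw [← (φ1 e).1, h', (φ1 e').1]
    simp only [φ, h, ht] at h'
    exact (ψ _ _).injective h'
  have φsurj : ∀ (s : Fin n) e0, (ep e0).1.val = s.val % d → ∃ e, (ep e).1 = s ∧ φ e = e0 := by
    intro s e0 h
    obtain ⟨e, he⟩ := (ψ (ep e0).2 s.val).surjective e0
    have := (hψ (ep e0).2 s.val s.isLt e).2 (by rw [he]; exact ⟨rfl, h⟩)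
    refine ⟨e, Fin.ext this.2, ?_⟩
    simp only [φ, this.1, this.2, he]
  haveI : Finite T := by
    refine Finite.of_surjective (fun e => (ep e).2) fun t => ?_
    have := hreg t 0 (by omega)
    obtain ⟨e, he⟩ := Finset.card_pos.1 (by rw [this]; exact hr)
    exact ⟨e, (Finset.mem_filter.1 he).2.1⟩
  haveI := Fintype.ofFinite T
  let E : Finset ι := Finset.univ.filter (fun e => (ep e).1.val < d)
  have hE : ∀ e, e ∈ E ↔ (ep e).1.val < d := by intro e; simp [E]
  let a : ι → Fin d := fun e => ⟨(ep e).1.val % d, Nat.mod_lt _ hdp⟩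
  have hA : ∀ x, (E.filter (fun e => a e = x)).card = r := by
    intro x
    rw [← hdeg ⟨x.val, by omega⟩]
    congr 1
    ext e
    simp only [Finset.mem_filter, hE, Finset.mem_univ, true_and, a, Fin.ext_iff]
    constructor
    · rintro ⟨h, h'⟩; rwa [Nat.mod_eq_of_lt h] at h'
    · intro h; have := x.isLt; rw [h, Nat.mod_eq_of_lt this]; exact ⟨this, rfl⟩
  obtain ⟨f, f1, f2, f3⟩ := aux_konig a (fun e => (ep e).2) r E hA (by
    intro t
    rw [← hreg t 0 (by omega)]
    congr 1
    ext e
    simp only [Finset.mem_filter, hE, Finset.mem_univ, true_and]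
    constructor
    · rintro ⟨h, h'⟩; exact ⟨h', by omega, by omega⟩
    · rintro ⟨h, _, h'⟩; exact ⟨by omega, h⟩)
  have φE : ∀ e, φ e ∈ E := fun e => by
    rw [hE, (φ1 e).2]; exact Nat.mod_lt _ hdp
  refine ⟨fun c => Finset.univ.filter (fun e => f (φ e) = c.val), fun c => ⟨fun s => ?_, ?_⟩, ?_⟩
  · let x : Fin d := ⟨s.val % d, Nat.mod_lt _ hdp⟩
    have hsurj : (E.filter (fun e => a e = x)).image f = Finset.range r := by
      refine Finset.eq_of_subset_of_card_le ?_ ?_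
      · intro k hk
        obtain ⟨e, he, rfl⟩ := Finset.mem_image.1 hk
        exact Finset.mem_range.2 (f1 e (Finset.mem_filter.1 he).1)
      · rw [Finset.card_image_of_injOn, hA, Finset.card_range]
        intro e he e' he' h
        have he := Finset.mem_filter.1 (Finset.mem_coe.1 he)
        have he' := Finset.mem_filter.1 (Finset.mem_coe.1 he')
        exact f2 e he.1 e' he'.1 h (he.2.trans he'.2.symm)
    have hc := Finset.mem_range.2 c.isLt
    rw [← hsurj] at hc
    obtain ⟨e0, h0, hc0⟩ := Finset.mem_image.1 hc
    obtain ⟨h0, hx⟩ := Finset.mem_filter.1 h0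
    obtain ⟨e, he, hφ⟩ := φsurj s e0 (by
      have := congrArg Fin.val hx
      simp only [a, x] at this
      rwa [Nat.mod_eq_of_lt ((hE _).1 h0)] at this)
    refine ⟨e, ⟨by simp [hφ, hc0], he⟩, ?_⟩
    rintro e' ⟨h1, h2⟩
    have h1 := (Finset.mem_filter.1 h1).2
    refine φinj e' e (h2.trans he.symm) ?_
    refine f2 _ (φE _) _ (φE _) (by rw [h1, hφ, hc0]) ?_
    simp only [a, Fin.mk.injEq]
    rw [(φ1 _).2, (φ1 _).2, h2, he]
  · intro e he e' he' ht hne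
    have he := (Finset.mem_filter.1 he).2
    have he' := (Finset.mem_filter.1 he').2
    have hφ : φ e = φ e' := f3 _ (φE _) _ (φE _) (by rw [he, he'])
      (by simp only [(φ1 _).1, ht])
    have hmod : (ep e).1.val ≡ (ep e').1.val [MOD d] := by
      unfold Nat.ModEq
      rw [← (φ1 e).2, ← (φ1 e').2, hφ]
    have hne' : (ep e).1.val ≠ (ep e').1.val := fun h => hne (φinj _ _ (Fin.ext h) hφ)
    rcases lt_or_gt_of_ne hne' with h | h
    · rw [Nat.dist_eq_sub_of_le h.le]
      exact Nat.le_of_dvd (by omega) ((Nat.modEq_iff_dvd' h.le).1 hmod)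
    · rw [Nat.dist_eq_sub_of_le_right h.le]
      exact Nat.le_of_dvd (by omega) ((Nat.modEq_iff_dvd' h.le).1 hmod.symm)
  · intro e
    refine ⟨⟨f (φ e), f1 _ (φE e)⟩, by simp, ?_⟩
    intro c hc
    have := (Finset.mem_filter.1 hc).2
    exact Fin.ext this.symm
end
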